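/- arXiv:1503.05995 — 6 statements merged into one kernel-verified Lean document; each statement's English description precedes it below -/
import Mathlib

section
/- Let φ : M_a × M_b → M_c be a ℂ-bilinear map. Then: (i) for q,r ∈ ℕ, φ is (1,q,r)-positive if and only if φ is (1, q∧r, q∧r)-positive, where q∧r = min(q,r); (ii) for p,r ∈ ℕ, φ is (p,1,r)-positive if and only if φ is (p∧r, 1, p∧r)-positive. -/
open Matrix Kronecker ComplexOrder

noncomputable section

abbrev Mat (n : ℕ) := Matrix (Fin n) (Fin n) ℂ

def blk {p a : ℕ} (x : Matrix (Fin p × Fin a) (Fin p × Fin a) ℂ) (i j : Fin p) :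
    Mat a := Matrix.of fun s t => x (i, s) (j, t)

def ampl {a b c p q : ℕ} (φ : Mat a →ₗ[ℂ] Mat b →ₗ[ℂ] Mat c)
    (x : Matrix (Fin p × Fin a) (Fin p × Fin a) ℂ)
    (y : Matrix (Fin q × Fin b) (Fin q × Fin b) ℂ) :
    Matrix ((Fin p × Fin q) × Fin c) ((Fin p × Fin q) × Fin c) ℂ :=
  Matrix.of fun u v => φ (blk x u.1.1 v.1.1) (blk y u.1.2 v.1.2) u.2 v.2

def compress {c p q r : ℕ} (α : Matrix (Fin r) (Fin p × Fin q) ℂ)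
    (X : Matrix ((Fin p × Fin q) × Fin c) ((Fin p × Fin q) × Fin c) ℂ) :
    Matrix (Fin r × Fin c) (Fin r × Fin c) ℂ :=
  Matrix.of fun u v => ∑ ik, ∑ jl, α u.1 ik * (starRingEnd ℂ) (α v.1 jl) * X (ik, u.2) (jl, v.2)

def IsPQRPos {a b c : ℕ} (φ : Mat a →ₗ[ℂ] Mat b →ₗ[ℂ] Mat c) (p q r : ℕ) : Prop :=
  ∀ (x : Matrix (Fin p × Fin a) (Fin p × Fin a) ℂ), x.PosSemidef →
  ∀ (y : Matrix (Fin q × Fin b) (Fin q × Fin b) ℂ), y.PosSemidef →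
  ∀ (α : Matrix (Fin r) (Fin p × Fin q) ℂ), (compress α (ampl φ x y)).PosSemidef

/-!
Scalar compressions of the blocks pass through `φ`:
`φ_{p,q}(δ x δ*, γ y γ*) = (δ ⊗ γ) φ_{p,q}(x, y) (δ ⊗ γ)*`. Hence `(p,q,r)`-positivity implies
`(p',q',r')`-positivity as soon as every `r' × p'q'` matrix has the form `β α (δ ⊗ γ)` with `α` of
size `r × pq`. Truncation gives monotonicity; flattening an `r × pq` matrix to a `pr × q` matrix `γ`
writes it as `β (1 ⊗ γ)`, so that values of `q` beyond `pr` add nothing; and nothing is added by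
values of `r` beyond `pq`, since an `r × pq` matrix factors through the `pq × pq` identity.
-/

section Factorization

variable {R π ρ σ κ : Type*} [Semiring R]

lemma exists_mul_eq_one_of_le {m n : ℕ} (h : m ≤ n) :
    ∃ (F : Matrix (Fin m) (Fin n) R) (G : Matrix (Fin n) (Fin m) R), F * G = 1 := by
  refine ⟨(1 : Matrix _ _ R).submatrix (Fin.castLE h) id,
    (1 : Matrix _ _ R).submatrix id (Fin.castLE h), ?_⟩
  rw [← submatrix_mul _ _ _ _ _ Function.bijective_id, Matrix.one_mul]
  exact submatrix_one _ (Fin.castLE_injective h)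

lemma exists_mul_one_kronecker_eq [Fintype π] [DecidableEq π] [Fintype σ] (e : σ ≃ π × ρ)
    (α : Matrix ρ (π × κ) R) :
    ∃ (β : Matrix ρ (π × σ) R) (γ : Matrix σ κ R), β * ((1 : Matrix π π R) ⊗ₖ γ) = α := by
  classical
  refine ⟨of fun i kt => if e kt.2 = (kt.1, i) then 1 else 0,
    of fun t l => α (e t).2 ((e t).1, l), ?_⟩
  ext i ⟨k, l⟩
  simp [mul_apply, one_apply, Fintype.sum_prod_type_right, ← Equiv.eq_symm_apply]

end Factorization

section BlockConj

variable {R ι κ μ d : Type*} [CommRing R] [StarRing R] [Fintype ι] [Fintype d] [DecidableEq d]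

/-- The congruence `X ↦ (γ ⊗ 1) X (γ ⊗ 1)*` of a block matrix `X` by a scalar matrix `γ`, written
`γ X γ*` in the definition of positivity. The index types are arbitrary, so that it acts both on the
arguments of a bilinear map (`ampl_blockConj`) and on its values (`compress_eq_blockConj`). -/
def blockConj (γ : Matrix κ ι R) (X : Matrix (ι × d) (ι × d) R) : Matrix (κ × d) (κ × d) R :=
  (γ ⊗ₖ (1 : Matrix d d R)) * X * (γ ⊗ₖ (1 : Matrix d d R))ᴴ

lemma blockConj_apply (γ : Matrix κ ι R) (X : Matrix (ι × d) (ι × d) R) (u v : κ × d) :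
    blockConj γ X u v = ∑ i, ∑ j, γ u.1 i * star (γ v.1 j) * X (i, u.2) (j, v.2) := by
  simp only [blockConj, mul_apply, Fintype.sum_prod_type, kroneckerMap_apply, one_apply, mul_ite,
    mul_one, mul_zero, ite_mul, zero_mul, Finset.sum_ite_eq, Finset.mem_univ, if_true,
    conjTranspose_apply, apply_ite star, star_zero, Finset.sum_mul]
  rw [Finset.sum_comm]
  exact Finset.sum_congr rfl fun i _ => Finset.sum_congr rfl fun j _ => mul_right_comm _ _ _

lemma blockConj_mul [Fintype κ] (β : Matrix μ κ R) (γ : Matrix κ ι R)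
    (X : Matrix (ι × d) (ι × d) R) :
    blockConj (β * γ) X = blockConj β (blockConj γ X) := by
  have kronecker_mul : (β * γ) ⊗ₖ (1 : Matrix d d R) =
      (β ⊗ₖ (1 : Matrix d d R)) * (γ ⊗ₖ (1 : Matrix d d R)) := by
    rw [← mul_kronecker_mul, Matrix.one_mul]
  simp only [blockConj, kronecker_mul, conjTranspose_mul, Matrix.mul_assoc]

lemma posSemidef_blockConj [PartialOrder R] [Finite κ] {X : Matrix (ι × d) (ι × d) R}
    (hX : X.PosSemidef) (γ : Matrix κ ι R) : (blockConj γ X).PosSemidef :=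
  hX.mul_mul_conjTranspose_same _

end BlockConj

section Ampl

variable {a b c p q p' q' r : ℕ} (φ : Mat a →ₗ[ℂ] Mat b →ₗ[ℂ] Mat c)

lemma compress_eq_blockConj (α : Matrix (Fin r) (Fin p × Fin q) ℂ)
    (X : Matrix ((Fin p × Fin q) × Fin c) ((Fin p × Fin q) × Fin c) ℂ) :
    compress α X = blockConj α X := by
  ext u v
  exact (blockConj_apply α X u v).symm

lemma blk_blockConj (γ : Matrix (Fin q) (Fin p) ℂ)
    (x : Matrix (Fin p × Fin a) (Fin p × Fin a) ℂ) (k l : Fin q) :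
    blk (blockConj γ x) k l = ∑ i, ∑ j, (γ k i * star (γ l j)) • blk x i j := by
  ext s t
  simp [blk, blockConj_apply, Matrix.sum_apply]

lemma ampl_blockConj (δ : Matrix (Fin p') (Fin p) ℂ) (γ : Matrix (Fin q') (Fin q) ℂ)
    (x : Matrix (Fin p × Fin a) (Fin p × Fin a) ℂ)
    (y : Matrix (Fin q × Fin b) (Fin q × Fin b) ℂ) :
    ampl φ (blockConj δ x) (blockConj γ y) = blockConj (δ ⊗ₖ γ) (ampl φ x y) := by
  ext u v
  have ampl_blk (k l : Fin p' × Fin q') :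
      φ (blk (blockConj δ x) k.1 l.1) (blk (blockConj γ y) k.2 l.2) =
        ∑ i, ∑ m, ∑ j, ∑ n, ((δ ⊗ₖ γ) k (i, m) * star ((δ ⊗ₖ γ) l (j, n))) •
          φ (blk x i j) (blk y m n) := by
    simp only [blk_blockConj, LinearMap.map_sum₂, LinearMap.map_smul₂]
    simp only [map_sum, map_smul, Finset.smul_sum, smul_smul, kroneckerMap_apply, star_mul']
    refine Finset.sum_congr rfl fun i _ => Finset.sum_comm.trans ?_
    simp only [mul_mul_mul_comm]
  simp only [ampl, of_apply, ampl_blk, blockConj_apply, Matrix.sum_apply, Matrix.smul_apply,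
    smul_eq_mul, Fintype.sum_prod_type]

lemma compress_ampl_flip (α : Matrix (Fin r) (Fin p × Fin q) ℂ)
    (x : Matrix (Fin p × Fin a) (Fin p × Fin a) ℂ)
    (y : Matrix (Fin q × Fin b) (Fin q × Fin b) ℂ) :
    compress (α.submatrix id Prod.swap) (ampl φ.flip y x) = compress α (ampl φ x y) := by
  ext u v
  refine Fintype.sum_equiv (Equiv.prodComm _ _) _ _ fun i => ?_
  exact Fintype.sum_equiv (Equiv.prodComm _ _) _ _ fun j => rfl

end Ampl

namespace IsPQRPos

variable {a b c p q r p' q' r' : ℕ} {φ : Mat a →ₗ[ℂ] Mat b →ₗ[ℂ] Mat c}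

lemma of_factorization (H : IsPQRPos φ p q r)
    (hfac : ∀ α' : Matrix (Fin r') (Fin p' × Fin q') ℂ,
      ∃ (β : Matrix (Fin r') (Fin r) ℂ) (α : Matrix (Fin r) (Fin p × Fin q) ℂ)
        (δ : Matrix (Fin p) (Fin p') ℂ) (γ : Matrix (Fin q) (Fin q') ℂ),
        β * α * (δ ⊗ₖ γ) = α') :
    IsPQRPos φ p' q' r' := by
  intro x hx y hy α'
  obtain ⟨β, α, δ, γ, rfl⟩ := hfac α'
  have compress_pos := H _ (posSemidef_blockConj hx δ) _ (posSemidef_blockConj hy γ) α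
  rw [compress_eq_blockConj, ampl_blockConj] at compress_pos
  rw [compress_eq_blockConj, blockConj_mul, blockConj_mul]
  exact posSemidef_blockConj compress_pos β

lemma mono (H : IsPQRPos φ p q r) (hp : p' ≤ p) (hq : q' ≤ q) (hr : r' ≤ r) :
    IsPQRPos φ p' q' r' := by
  obtain ⟨D, δ, hδ⟩ := exists_mul_eq_one_of_le (R := ℂ) hp
  obtain ⟨C, γ, hγ⟩ := exists_mul_eq_one_of_le (R := ℂ) hq
  obtain ⟨β, B, hβ⟩ := exists_mul_eq_one_of_le (R := ℂ) hr
  refine H.of_factorization fun α' => ⟨β, B * α' * (D ⊗ₖ C), δ, γ, ?_⟩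
  calc β * (B * α' * (D ⊗ₖ C)) * (δ ⊗ₖ γ) = (β * B) * α' * ((D ⊗ₖ C) * (δ ⊗ₖ γ)) := by
        simp only [Matrix.mul_assoc]
    _ = α' := by
        rw [← mul_kronecker_mul, hδ, hγ, hβ, one_kronecker_one, Matrix.one_mul, Matrix.mul_one]

lemma compression_of_mul (H : IsPQRPos φ p q (p * q)) : IsPQRPos φ p q r := by
  let e : Fin (p * q) ≃ Fin p × Fin q := finProdFinEquiv.symm
  refine H.of_factorization fun α' =>
    ⟨α'.submatrix id e, (1 : Matrix _ _ ℂ).submatrix e id, 1, 1, ?_⟩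
  rw [submatrix_mul_equiv, one_kronecker_one, Matrix.mul_one, Matrix.mul_one, submatrix_id_id]

lemma right_of_mul (H : IsPQRPos φ p (p * r) r) : IsPQRPos φ p q r :=
  H.of_factorization fun α' =>
    let ⟨β, γ, hβγ⟩ := exists_mul_one_kronecker_eq finProdFinEquiv.symm α'
    ⟨1, β, 1, γ, by rw [Matrix.one_mul, hβγ]⟩

lemma iff_min_compression : IsPQRPos φ p q r ↔ IsPQRPos φ p q (min (p * q) r) := by
  refine ⟨fun H => H.mono le_rfl le_rfl (min_le_right _ _), fun H => ?_⟩
  rcases le_total (p * q) r with h | h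
  · rw [min_eq_left h] at H
    exact H.compression_of_mul
  · rwa [min_eq_right h] at H

lemma iff_min_right : IsPQRPos φ p q r ↔ IsPQRPos φ p (min q (p * r)) r := by
  refine ⟨fun H => H.mono le_rfl (min_le_left _ _) le_rfl, fun H => ?_⟩
  rcases le_total q (p * r) with h | h
  · rwa [min_eq_left h] at H
  · rw [min_eq_right h] at H
    exact H.right_of_mul

lemma flip (H : IsPQRPos φ p q r) : IsPQRPos φ.flip q p r := fun y hy x hx α => by
  rw [← compress_ampl_flip, LinearMap.flip_flip]
  exact H x hx y hy _

lemma flip_iff : IsPQRPos φ.flip q p r ↔ IsPQRPos φ p q r :=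
  ⟨flip, flip⟩

lemma iff_min_right_compression :
    IsPQRPos φ p q r ↔ IsPQRPos φ p (min q (p * r)) (min (p * q) r) := by
  have min_eq : min q (p * min (p * q) r) = min q (p * r) := by
    rcases p.eq_zero_or_pos with rfl | hp
    · simp
    · have q_le : q ≤ p * (p * q) :=
        (Nat.le_mul_of_pos_left q hp).trans (Nat.le_mul_of_pos_left _ hp)
      rw [← Nat.mul_min_mul_left, ← min_assoc, min_eq_left q_le]
  rw [iff_min_compression, iff_min_right, min_eq]

end IsPQRPos

theorem stmt1_general {a b c : ℕ} (φ : Mat a →ₗ[ℂ] Mat b →ₗ[ℂ] Mat c) (p q r : ℕ) :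
    (IsPQRPos φ p q r ↔ IsPQRPos φ p (min q (p * r)) (min (p * q) r)) ∧
    (IsPQRPos φ p q r ↔ IsPQRPos φ (min p (q * r)) q (min (p * q) r)) := by
  refine ⟨IsPQRPos.iff_min_right_compression, ?_⟩
  rw [← IsPQRPos.flip_iff, IsPQRPos.iff_min_right_compression, IsPQRPos.flip_iff, mul_comm q p]

/-- Proposition "redundant2": (i) φ is (1,q,r)-positive iff φ is (1, q∧r, q∧r)-positive;
(ii) φ is (p,1,r)-positive iff φ is (p∧r, 1, p∧r)-positive. -/
theorem stmt1 {a b c : ℕ} (φ : Mat a →ₗ[ℂ] Mat b →ₗ[ℂ] Mat c) :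
    (∀ q r : ℕ, IsPQRPos φ 1 q r ↔ IsPQRPos φ 1 (min q r) (min q r)) ∧
    (∀ p r : ℕ, IsPQRPos φ p 1 r ↔ IsPQRPos φ (min p r) 1 (min p r)) := by
  refine ⟨fun q r => ?_, fun p r => ?_⟩
  · simpa using (stmt1_general φ 1 q r).1
  · simpa using (stmt1_general φ p 1 r).2
end
end

section
/- Let φ : M_p × M_b → M_c be a ℂ-bilinear map (i.e., the first factor of the domain is M_p). Then φ is (p,p,1)-positive if and only if its linearization D_φ : M_p ⊗ M_b ≅ M_{pb} → M_c, the linear map determined by D_φ(x ⊗ y) = φ(x,y), sends positive matrices to positive matrices. -/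
open Matrix Kronecker ComplexOrder

noncomputable section

/-
Every `α φ_{p,q}(x, y) α*` is obtained by applying `D` blockwise to the compression `α (x ⊗ y) α*`,
which is positive whenever `x` and `y` are. Conversely, compressing `ω ω* ⊗ z` by the maximally
entangled vector `ω = ∑ e_i ⊗ e_i` gives back `z`, so every positive `z` arises in this way.
-/

section KroneckerCompress

variable {R I J K L 𝕜 : Type*} [Fintype K] [Fintype L] [Fintype I] [Fintype J]
  [DecidableEq I] [DecidableEq J]

/-- The compression `α (x ⊗ y) α*` in `M_r(M_a ⊗ M_b)`, i.e. the matrix `α φ_{p,q}(x, y) α*` of the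
universal bilinear map `φ = ⊗`; the index types `R, K, L, I, J` have `r, p, q, a, b` elements.
Tensor factors are regrouped so that the blocks, indexed by the rows of `α`, lie in `M_a ⊗ M_b`. -/
def kroneckerCompress [CommSemiring 𝕜] [StarRing 𝕜] (α : Matrix R (K × L) 𝕜)
    (x : Matrix (K × I) (K × I) 𝕜) (y : Matrix (L × J) (L × J) 𝕜) :
    Matrix (R × I × J) (R × I × J) 𝕜 :=
  (α ⊗ₖ (1 : Matrix (I × J) (I × J) 𝕜)) *
    (x ⊗ₖ y).submatrix (Equiv.prodProdProdComm K L I J) (Equiv.prodProdProdComm K L I J) *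
    (α ⊗ₖ (1 : Matrix (I × J) (I × J) 𝕜))ᴴ

lemma kronecker_one_mul_mul_conjTranspose_apply [CommSemiring 𝕜] [StarRing 𝕜]
    (α : Matrix R K 𝕜) (X : Matrix (K × I) (K × I) 𝕜) (u v : R) (i j : I) :
    ((α ⊗ₖ (1 : Matrix I I 𝕜)) * X * (α ⊗ₖ (1 : Matrix I I 𝕜))ᴴ) (u, i) (v, j) =
      ∑ k, ∑ l, α u k * star (α v l) * X (k, i) (l, j) := by
  simp only [mul_apply, conjTranspose_apply, kroneckerMap_apply, one_apply, Fintype.sum_prod_type,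
    mul_ite, mul_one, mul_zero, ite_mul, zero_mul, apply_ite star, star_zero, Finset.sum_ite_eq,
    Finset.mem_univ, if_true, Finset.sum_mul]
  rw [Finset.sum_comm]
  simp only [mul_right_comm]

lemma kroneckerCompress_apply [CommSemiring 𝕜] [StarRing 𝕜] (α : Matrix R (K × L) 𝕜)
    (x : Matrix (K × I) (K × I) 𝕜) (y : Matrix (L × J) (L × J) 𝕜) (u v : R) (s t : I × J) :
    kroneckerCompress α x y (u, s) (v, t) =
      ∑ k, ∑ l, α u k * star (α v l) *
        (x (k.1, s.1) (l.1, t.1) * y (k.2, s.2) (l.2, t.2)) :=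
  kronecker_one_mul_mul_conjTranspose_apply α _ u v s t

lemma posSemidef_kroneckerCompress [RCLike 𝕜] [Finite R] (α : Matrix R (K × L) 𝕜)
    {x : Matrix (K × I) (K × I) 𝕜} {y : Matrix (L × J) (L × J) 𝕜}
    (hx : x.PosSemidef) (hy : y.PosSemidef) : (kroneckerCompress α x y).PosSemidef :=
  ((hx.kronecker hy).submatrix _).mul_mul_conjTranspose_same _

/- With `ω = vec 1`, the blocks of `ω ω*` are the matrix units `E_{ij}`, so each block of the
compression is `∑ E_{ij} ⊗ z_{ij}`. -/
lemma submatrix_kroneckerCompress_vec_one [CommSemiring 𝕜] [StarRing 𝕜]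
    (z : Matrix (I × J) (I × J) 𝕜) (u v : R) :
    (kroneckerCompress (replicateRow R (vec (1 : Matrix I I 𝕜)))
      (vecMulVec (vec (1 : Matrix I I 𝕜)) (star (vec 1))) z).submatrix (Prod.mk u) (Prod.mk v) =
      z := by
  ext s t
  simp [kroneckerCompress_apply, Fintype.sum_prod_type, vecMulVec_apply, vec, one_apply,
    apply_ite star]

end KroneckerCompress

section Linearization

variable {a b c p q : ℕ} {φ : Mat a →ₗ[ℂ] Mat b →ₗ[ℂ] Mat c}
  {D : Matrix (Fin a × Fin b) (Fin a × Fin b) ℂ →ₗ[ℂ] Mat c}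

lemma submatrix_kroneckerCompress_eq_sum {r : ℕ} (α : Matrix (Fin r) (Fin p × Fin q) ℂ)
    (x : Matrix (Fin p × Fin a) (Fin p × Fin a) ℂ)
    (y : Matrix (Fin q × Fin b) (Fin q × Fin b) ℂ) (u v : Fin r) :
    (kroneckerCompress α x y).submatrix (Prod.mk u) (Prod.mk v) =
      ∑ k, ∑ l, (α u k * star (α v l)) • (blk x k.1 l.1 ⊗ₖ blk y k.2 l.2) := by
  ext s t
  simp only [submatrix_apply, kroneckerCompress_apply, Matrix.sum_apply, Matrix.smul_apply,
    kroneckerMap_apply, blk, of_apply, smul_eq_mul]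

lemma compress_ampl_apply (hD : ∀ x y, D (x ⊗ₖ y) = φ x y) {r : ℕ}
    (α : Matrix (Fin r) (Fin p × Fin q) ℂ) (x : Matrix (Fin p × Fin a) (Fin p × Fin a) ℂ)
    (y : Matrix (Fin q × Fin b) (Fin q × Fin b) ℂ) (u v : Fin r × Fin c) :
    compress α (ampl φ x y) u v =
      D ((kroneckerCompress α x y).submatrix (Prod.mk u.1) (Prod.mk v.1)) u.2 v.2 := by
  simp only [submatrix_kroneckerCompress_eq_sum, map_sum, map_smul, hD, Matrix.sum_apply,
    Matrix.smul_apply, smul_eq_mul, compress, ampl, of_apply, starRingEnd_apply]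

lemma posSemidef_compress_ampl_iff (hD : ∀ x y, D (x ⊗ₖ y) = φ x y)
    (α : Matrix (Fin 1) (Fin p × Fin q) ℂ) (x : Matrix (Fin p × Fin a) (Fin p × Fin a) ℂ)
    (y : Matrix (Fin q × Fin b) (Fin q × Fin b) ℂ) :
    (compress α (ampl φ x y)).PosSemidef ↔
      (D ((kroneckerCompress α x y).submatrix (Prod.mk 0) (Prod.mk 0))).PosSemidef := by
  rw [← posSemidef_submatrix_equiv (Equiv.uniqueProd (Fin c) (Fin 1))]
  congr! 1
  ext u v
  rw [compress_ampl_apply hD, Subsingleton.elim u.1 0, Subsingleton.elim v.1 0]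
  rfl

theorem isPQRPos_one_of_forall_posSemidef (hD : ∀ x y, D (x ⊗ₖ y) = φ x y)
    (h : ∀ z : Matrix (Fin a × Fin b) (Fin a × Fin b) ℂ, z.PosSemidef → (D z).PosSemidef) :
    IsPQRPos φ p q 1 := fun x hx y hy α =>
  (posSemidef_compress_ampl_iff hD α x y).2 <|
    h _ ((posSemidef_kroneckerCompress α hx hy).submatrix _)

theorem IsPQRPos.posSemidef_linearization (h : IsPQRPos φ a a 1)
    (hD : ∀ x y, D (x ⊗ₖ y) = φ x y) {z : Matrix (Fin a × Fin b) (Fin a × Fin b) ℂ}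
    (hz : z.PosSemidef) :
    (D z).PosSemidef := by
  rw [← submatrix_kroneckerCompress_vec_one z (0 : Fin 1) 0, ← posSemidef_compress_ampl_iff hD]
  exact h _ (posSemidef_vecMulVec_self_star _) z hz _

end Linearization

/-- Proposition "1pp" (iv): for φ : M_p × M_b → M_c, φ is (p,p,1)-positive iff its
linearization D : M_p ⊗ M_b ≅ M_{pb} → M_c (determined by D(x ⊗ y) = φ(x,y)) is a
positive map. -/
theorem stmt4 {p b c : ℕ} (φ : Mat p →ₗ[ℂ] Mat b →ₗ[ℂ] Mat c)
    (D : Matrix (Fin p × Fin b) (Fin p × Fin b) ℂ →ₗ[ℂ] Mat c)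
    (hD : ∀ (x : Mat p) (y : Mat b), D (x ⊗ₖ y) = φ x y) :
    IsPQRPos φ p p 1 ↔
      ∀ (z : Matrix (Fin p × Fin b) (Fin p × Fin b) ℂ), z.PosSemidef →
        (D z).PosSemidef :=
  ⟨fun h _ => h.posSemidef_linearization hD, isPQRPos_one_of_forall_posSemidef hD⟩
end
end

section
/- Let σ be a permutation of the three tensor factors and, for ξ ∈ ℂ^a ⊗ ℂ^b ⊗ ℂ^c, let ξ^σ denote the image of ξ under the corresponding flip (factor-permuting) isomorphism onto the σ-permuted triple tensor product. Then SR(ξ) = (α, β, γ) if and only if SR(ξ^σ) = (α, β, γ)^σ, where (α,β,γ)^σ is the triple (α,β,γ) with its entries permuted by σ. -/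
open Module

noncomputable section

abbrev EC (n : ℕ) := EuclideanSpace ℂ (Fin n)

/-- The coefficient matrices of ξ, as a linear map ℂ^a → M_{c×b}. -/
noncomputable def coefMat {a b c : ℕ} (ξ : Fin a → Fin b → Fin c → ℂ) :
    EC a →ₗ[ℂ] Matrix (Fin c) (Fin b) ℂ where
  toFun u := Matrix.of fun k j => ∑ i, ξ i j k * u i
  map_add' u u' := by
    ext k j
    simp [mul_add, Finset.sum_add_distrib]
  map_smul' r u := by
    ext k j
    simp [Finset.mul_sum]
    ring_nf
    simp [mul_comm, mul_left_comm]

/-- The linear map Λ_ξ : ℂ^a → L(ℂ^b, ℂ^c) associated to ξ ∈ ℂ^a ⊗ ℂ^b ⊗ ℂ^c,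
determined by (Λ_ξ(e_i)(e_j))_k = ξ_{i,j,k}. -/
noncomputable def Lam {a b c : ℕ} (ξ : Fin a → Fin b → Fin c → ℂ) :
    EC a →ₗ[ℂ] (EC b →ₗ[ℂ] EC c) :=
  (Matrix.toEuclideanLin.toLinearMap).comp (coefMat ξ)

/-- α_ξ : the rank of Λ_ξ. -/
noncomputable def alphaDim {a b c : ℕ} (ξ : Fin a → Fin b → Fin c → ℂ) : ℕ :=
  finrank ℂ (LinearMap.range (Lam ξ))

/-- β_ξ : the dimension of the span of the supports of all operators in the range of Λ_ξ. -/
noncomputable def betaDim {a b c : ℕ} (ξ : Fin a → Fin b → Fin c → ℂ) : ℕ :=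
  finrank ℂ (⨆ T ∈ LinearMap.range (Lam ξ), (LinearMap.ker T)ᗮ : Submodule ℂ (EC b))

/-- γ_ξ : the dimension of the span of the ranges of all operators in the range of Λ_ξ. -/
noncomputable def gammaDim {a b c : ℕ} (ξ : Fin a → Fin b → Fin c → ℂ) : ℕ :=
  finrank ℂ (⨆ T ∈ LinearMap.range (Lam ξ), LinearMap.range T : Submodule ℂ (EC c))

/-
Freeze all indices of a multidimensional array but the `m`-th: the resulting vectors, the mode-`m`
fibers, span a space whose dimension is the mode-`m` rank. Permuting the factors permutes the
fibers, so it permutes the mode ranks. For a triple tensor these are `α`, `β`, `γ`. The first is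
row rank = column rank for the flattening of `Λ_ξ`. For the second, the span of the supports is the
orthogonal complement of the common kernel of the `Λ_ξ u`, that is, of the kernel of the flipped
bilinear map `v ↦ u ↦ Λ_ξ u v`, which swaps the first two factors and reduces `β` to `α`. For the
third, the span of the ranges is spanned by the vectors `Λ_ξ e_i e_j`, which are the fibers
themselves.
-/

section ModeRank

variable {I J K : Type*} [DecidableEq I] [DecidableEq J] {ι : I → Type*}

/-- The mode-`m` fiber through `x` of a multidimensional array `T`: all indices but the `m`-th are
frozen at their values in `x`. It does not depend on `x m`; keeping that entry means that permuting
the modes is a plain reindexing of `x`. -/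
def modeFiber (T : (∀ m, ι m) → K) (m : I) (x : ∀ m, ι m) : ι m → K :=
  fun i => T (Function.update x m i)

/-- The mode-`m` rank (multilinear rank) of a multidimensional array: the dimension of the span of
its mode-`m` fibers (`0` if that is infinite). It describes the entries of the Schmidt rank
symmetrically. -/
def modeRank [Semiring K] (T : (∀ m, ι m) → K) (m : I) : ℕ :=
  Set.finrank K (Set.range (modeFiber T m))

theorem modeFiber_reindex {T : (∀ m, ι m) → K} (e : J ≃ I) {T' : (∀ n, ι (e n)) → K}
    (h : ∀ x : ∀ m, ι m, T' (fun n => x (e n)) = T x) (n : J) (x : ∀ m, ι m) :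
    modeFiber T' n (fun n => x (e n)) = modeFiber T (e n) x := by
  funext i
  rw [modeFiber, modeFiber, ← Function.update_comp_eq_of_injective' x e.injective, h]

theorem modeRank_reindex [Semiring K] {T : (∀ m, ι m) → K} (e : J ≃ I) {T' : (∀ n, ι (e n)) → K}
    (h : ∀ x : ∀ m, ι m, T' (fun n => x (e n)) = T x) (n : J) :
    modeRank T' n = modeRank T (e n) := by
  rw [modeRank, modeRank, ← (e.piCongrLeft ι).symm.surjective.range_comp (modeFiber T' n)]
  exact congrArg (fun v => Set.finrank K (Set.range v)) (funext (modeFiber_reindex e h n))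

end ModeRank

theorem finrank_range_comp_of_surjective {K l m n : Type*} [Semiring K] {f : l → m}
    (v : m → n → K) (hf : Nonempty n → Function.Surjective f) :
    Set.finrank K (Set.range (v ∘ f)) = Set.finrank K (Set.range v) := by
  -- For empty `n` there may be no `x : l` at all, but then both spans live in a trivial space.
  cases isEmpty_or_nonempty n
  · rw [Set.finrank, Set.finrank, Subsingleton.elim (Submodule.span K (Set.range (v ∘ f)))]
  · rw [(hf ‹_›).range_comp]

theorem finrank_range_eq_of_ker_eq {R V W W' : Type*} [Ring R] [AddCommGroup V] [Module R V]
    [AddCommGroup W] [Module R W] [AddCommGroup W'] [Module R W'] {f : V →ₗ[R] W}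
    {g : V →ₗ[R] W'} (h : LinearMap.ker f = LinearMap.ker g) :
    finrank R (LinearMap.range f) = finrank R (LinearMap.range g) :=
  (f.quotKerEquivRange.symm ≪≫ₗ Submodule.quotEquivOfEq _ _ h ≪≫ₗ g.quotKerEquivRange).finrank_eq

theorem iSup_range_eq_span_range_basis {R U V W κ κ' : Type*} [CommSemiring R]
    [AddCommMonoid U] [Module R U] [AddCommMonoid V] [Module R V] [AddCommMonoid W] [Module R W]
    (B : U →ₗ[R] V →ₗ[R] W) (b : Basis κ R U) (b' : Basis κ' R V) :
    ⨆ T ∈ LinearMap.range B, LinearMap.range T =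
      Submodule.span R (Set.range fun p : κ × κ' => B (b p.1) (b' p.2)) :=
  calc ⨆ T ∈ LinearMap.range B, LinearMap.range T
    _ = ⨆ u, LinearMap.range (B u) := iSup_range
    _ = Submodule.map₂ B ⊤ ⊤ := by simp [Submodule.map₂, iSup_subtype]
    _ = _ := by rw [← b.span_eq, ← b'.span_eq, Submodule.map₂_span_span, Set.image2_range]

theorem iSup_orthogonal_ker_eq_orthogonal_ker_flip {𝕜 U V W : Type*} [RCLike 𝕜] [AddCommGroup U]
    [Module 𝕜 U] [NormedAddCommGroup V] [InnerProductSpace 𝕜 V] [FiniteDimensional 𝕜 V]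
    [AddCommGroup W] [Module 𝕜 W] (B : U →ₗ[𝕜] V →ₗ[𝕜] W) :
    (⨆ T ∈ LinearMap.range B, (LinearMap.ker T)ᗮ) = (LinearMap.ker B.flip)ᗮ := by
  have iInf_ker : ⨅ u, LinearMap.ker (B u) = LinearMap.ker B.flip := by
    ext v
    simp only [Submodule.mem_iInf, LinearMap.mem_ker, LinearMap.ext_iff, LinearMap.flip_apply,
      LinearMap.zero_apply]
  calc (⨆ T ∈ LinearMap.range B, (LinearMap.ker T)ᗮ)
    _ = ⨆ u, (LinearMap.ker (B u))ᗮ := iSup_range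
    _ = (⨅ u, (LinearMap.ker (B u))ᗮᗮ)ᗮ := by
      rw [Submodule.iInf_orthogonal, Submodule.orthogonal_orthogonal]
    _ = (LinearMap.ker B.flip)ᗮ := by simp only [Submodule.orthogonal_orthogonal, iInf_ker]

theorem finrank_orthogonal_ker {𝕜 V W : Type*} [RCLike 𝕜] [NormedAddCommGroup V]
    [InnerProductSpace 𝕜 V] [FiniteDimensional 𝕜 V] [AddCommGroup W] [Module 𝕜 W]
    (f : V →ₗ[𝕜] W) :
    finrank 𝕜 (LinearMap.ker f)ᗮ = finrank 𝕜 (LinearMap.range f) := by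
  have h_ker := (LinearMap.ker f).finrank_add_finrank_orthogonal
  have h_range := f.finrank_range_add_finrank_ker
  lia

section Lam

variable {a b c : ℕ} (ξ : Fin a → Fin b → Fin c → ℂ)

theorem Lam_apply (u : EC a) (v : EC b) (k : Fin c) :
    Lam ξ u v k = ∑ j, (∑ i, ξ i j k * u i) * v j := by
  simp [Lam, coefMat, Matrix.toLpLin_apply, Matrix.mulVec, dotProduct]

theorem Lam_flip : (Lam ξ).flip = Lam fun j i k => ξ i j k := by
  ext v u k
  simp only [LinearMap.flip_apply, Lam_apply, Finset.sum_mul, mul_right_comm]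
  exact Finset.sum_comm

theorem Lam_basisFun (i : Fin a) (j : Fin b) :
    Lam ξ ((EuclideanSpace.basisFun _ ℂ).toBasis i) ((EuclideanSpace.basisFun _ ℂ).toBasis j) =
      WithLp.toLp 2 (ξ i j) := by
  ext k
  simp [Lam_apply]

theorem alphaDim_eq_finrank_fibers :
    alphaDim ξ = Set.finrank ℂ (Set.range fun (p : Fin b × Fin c) i => ξ i p.1 p.2) := by
  let A : Matrix (Fin b × Fin c) (Fin a) ℂ := Matrix.of fun p i => ξ i p.1 p.2
  let e := WithLp.linearEquiv 2 ℂ (Fin a → ℂ)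
  have ker_eq : LinearMap.ker (Lam ξ) = LinearMap.ker (A.mulVecLin ∘ₗ e.toLinearMap) := by
    ext u
    calc Lam ξ u = 0 ↔ coefMat ξ u = 0 := Matrix.toEuclideanLin.map_eq_zero_iff
      _ ↔ ∀ k j, A.mulVec (e u) (j, k) = 0 := Matrix.ext_iff.symm
      _ ↔ A.mulVecLin (e u) = 0 := by rw [funext_iff, Prod.forall, forall_comm]; rfl
  calc alphaDim ξ
    _ = finrank ℂ (LinearMap.range (A.mulVecLin ∘ₗ e.toLinearMap)) :=
      finrank_range_eq_of_ker_eq ker_eq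
    _ = A.rank := by rw [LinearMap.range_comp_of_range_eq_top _ e.range, Matrix.rank]
    _ = _ := A.rank_eq_finrank_span_row

theorem betaDim_eq_finrank_fibers :
    betaDim ξ = Set.finrank ℂ (Set.range fun (p : Fin a × Fin c) j => ξ p.1 j p.2) := by
  rw [betaDim, iSup_orthogonal_ker_eq_orthogonal_ker_flip, finrank_orthogonal_ker, Lam_flip]
  exact alphaDim_eq_finrank_fibers fun j i k => ξ i j k

theorem gammaDim_eq_finrank_fibers :
    gammaDim ξ = Set.finrank ℂ (Set.range fun p : Fin a × Fin b => ξ p.1 p.2) := by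
  let e := WithLp.linearEquiv 2 ℂ (Fin c → ℂ)
  rw [gammaDim, iSup_range_eq_span_range_basis (Lam ξ) (EuclideanSpace.basisFun _ ℂ).toBasis
    (EuclideanSpace.basisFun _ ℂ).toBasis, ← e.finrank_map_eq, Submodule.map_span, ← Set.range_comp]
  exact congrArg (fun v => Set.finrank ℂ (Set.range v))
    (funext fun p : Fin a × Fin b => congrArg e (Lam_basisFun ξ p.1 p.2))

end Lam

section Tensor

variable {d : Fin 3 → ℕ} (ξ : Fin (d 0) → Fin (d 1) → Fin (d 2) → ℂ)

/-- The coordinates of `ξ` as a function of a single multi-index, so that the three tensor factors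
can be treated uniformly. -/
def uncurryTensor (x : ∀ m, Fin (d m)) : ℂ :=
  ξ (x 0) (x 1) (x 2)

theorem alphaDim_eq_modeRank : alphaDim ξ = modeRank (uncurryTensor ξ) 0 := by
  let others (x : ∀ m, Fin (d m)) := (x 1, x 2)
  have others_surjective : Nonempty (Fin (d 0)) → Function.Surjective others :=
    fun ⟨i⟩ ⟨j, k⟩ => ⟨Fin.cons i (Fin.cons j (Fin.cons k finZeroElim)), rfl⟩
  rw [alphaDim_eq_finrank_fibers, ← finrank_range_comp_of_surjective _ others_surjective]
  rfl

theorem betaDim_eq_modeRank : betaDim ξ = modeRank (uncurryTensor ξ) 1 := by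
  let others (x : ∀ m, Fin (d m)) := (x 0, x 2)
  have others_surjective : Nonempty (Fin (d 1)) → Function.Surjective others :=
    fun ⟨j⟩ ⟨i, k⟩ => ⟨Fin.cons i (Fin.cons j (Fin.cons k finZeroElim)), rfl⟩
  rw [betaDim_eq_finrank_fibers, ← finrank_range_comp_of_surjective _ others_surjective]
  rfl

theorem gammaDim_eq_modeRank : gammaDim ξ = modeRank (uncurryTensor ξ) 2 := by
  let others (x : ∀ m, Fin (d m)) := (x 0, x 1)
  have others_surjective : Nonempty (Fin (d 2)) → Function.Surjective others :=
    fun ⟨k⟩ ⟨i, j⟩ => ⟨Fin.cons i (Fin.cons j (Fin.cons k finZeroElim)), rfl⟩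
  rw [gammaDim_eq_finrank_fibers, ← finrank_range_comp_of_surjective _ others_surjective]
  rfl

theorem schmidtRank_eq_iff (t : Fin 3 → ℕ) :
    (alphaDim ξ = t 0 ∧ betaDim ξ = t 1 ∧ gammaDim ξ = t 2) ↔
      ∀ m, modeRank (uncurryTensor ξ) m = t m := by
  rw [alphaDim_eq_modeRank, betaDim_eq_modeRank, gammaDim_eq_modeRank, Fin.forall_fin_succ,
    Fin.forall_fin_two]
  rfl

end Tensor

/-- Corollary "permutation": for a permutation σ of the three tensor factors, if ξ' is
the image of ξ under the flip isomorphism associated to σ (so that the m-th factor of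
ξ' is the σ⁻¹(m)-th factor of ξ, expressed by the coordinate identity below), then
SR(ξ) = (α,β,γ) iff SR(ξ') = (α,β,γ)^σ.  Dimensions are encoded by d : Fin 3 → ℕ and
the triple (α,β,γ) by t : Fin 3 → ℕ. -/
theorem stmt7 (d : Fin 3 → ℕ) (σ : Equiv.Perm (Fin 3)) (t : Fin 3 → ℕ)
    (ξ : Fin (d 0) → Fin (d 1) → Fin (d 2) → ℂ)
    (ξ' : Fin (d (σ⁻¹ 0)) → Fin (d (σ⁻¹ 1)) → Fin (d (σ⁻¹ 2)) → ℂ)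
    (hflip : ∀ x : (m : Fin 3) → Fin (d m),
      ξ' (x (σ⁻¹ 0)) (x (σ⁻¹ 1)) (x (σ⁻¹ 2)) = ξ (x 0) (x 1) (x 2)) :
    (alphaDim ξ = t 0 ∧ betaDim ξ = t 1 ∧ gammaDim ξ = t 2) ↔
    (alphaDim ξ' = t (σ⁻¹ 0) ∧ betaDim ξ' = t (σ⁻¹ 1) ∧ gammaDim ξ' = t (σ⁻¹ 2)) := by
  let d' (m : Fin 3) := d (σ⁻¹ m)
  have modeRank_flip (m : Fin 3) :
      modeRank (uncurryTensor (d := d') ξ') m = modeRank (uncurryTensor ξ) (σ⁻¹ m) :=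
    modeRank_reindex (T := uncurryTensor ξ) σ⁻¹ hflip m
  calc (alphaDim ξ = t 0 ∧ betaDim ξ = t 1 ∧ gammaDim ξ = t 2)
    _ ↔ ∀ m, modeRank (uncurryTensor ξ) m = t m := schmidtRank_eq_iff ξ t
    _ ↔ ∀ m, modeRank (uncurryTensor ξ) (σ⁻¹ m) = t (σ⁻¹ m) :=
      ((σ⁻¹).forall_congr_right (q := fun m => modeRank (uncurryTensor ξ) m = t m)).symm
    _ ↔ ∀ m, modeRank (uncurryTensor (d := d') ξ') m = t (σ⁻¹ m) := by simp only [modeRank_flip]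
    _ ↔ _ := (schmidtRank_eq_iff (d := d') ξ' fun m => t (σ⁻¹ m)).symm
end
end

section
/- Let σ be a permutation of the three labels A, B, C (with associated sizes a, b, c), and let φ : M_a × M_b → M_c be a ℂ-bilinear map. Let φ^σ : M_{σA} × M_{σB} → M_{σC} be the unique bilinear map satisfying Tr(φ^σ(x_{σA}, x_{σB}) x_{σC}^T) = Tr(φ(x_A, x_B) x_C^T) for all x_A ∈ M_a, x_B ∈ M_b, x_C ∈ M_c. Then φ is (p,q,r)-positive if and only if φ^σ is (p,q,r)^σ-positive, where (p,q,r)^σ is the triple obtained by permuting (p,q,r) according to σ. -/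
open Matrix Kronecker ComplexOrder

noncomputable section

/-!
A complex matrix is positive iff its trace pairing with every positive matrix is nonnegative.
Applied to `α φ_{p,q}(x, y) α*` and tested against `z ≥ 0`, this says that the quadratic form of the
`pqr × pqr` matrix `[Tr(φ(x_{i,j}, y_{k,l}) z_{m,n}ᵀ)]` is nonnegative at the conjugate of `α`.
Since `α` is arbitrary, `φ` is `(p, q, r)`-positive iff this matrix is positive for all
`x, y, z ≥ 0`, a condition on the trilinear form `Tr(φ(x, y) zᵀ)` in which the three labels play the
same role: permuting them merely reindexes the matrix.
-/

section TraceDuality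

variable {n : Type*} [Fintype n]

theorem posSemidef_iff_forall_dotProduct_mulVec_nonneg {C : Matrix n n ℂ} :
    C.PosSemidef ↔ ∀ z : n → ℂ, 0 ≤ star z ⬝ᵥ C *ᵥ z := by
  classical
  refine ⟨fun hC => hC.dotProduct_mulVec_nonneg, fun h => ?_⟩
  have inner_nonneg (z : EuclideanSpace ℂ n) : 0 ≤ inner ℂ z (toEuclideanLin C z) := by
    simpa [EuclideanSpace.inner_eq_star_dotProduct, dotProduct_comm] using h z.ofLp
  have isSymmetric : (toEuclideanLin C).IsSymmetric := by
    rw [LinearMap.isSymmetric_iff_inner_map_self_real]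
    intro z
    rw [← inner_conj_symm (toEuclideanLin C z) z]
    exact congrArg star (inner_nonneg z).isSelfAdjoint.star_eq
  exact .of_dotProduct_mulVec_nonneg (isSymmetric_toEuclideanLin_iff.mp isSymmetric) h

theorem posSemidef_iff_forall_trace_mul_transpose_nonneg {C : Matrix n n ℂ} :
    C.PosSemidef ↔ ∀ w : Matrix n n ℂ, w.PosSemidef → 0 ≤ (C * wᵀ).trace := by
  constructor
  · intro hC w hw
    rw [← sum_hadamard_eq]
    simpa [dotProduct, mulVec] using (hC.hadamard hw).dotProduct_mulVec_nonneg 1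
  · intro h
    refine posSemidef_iff_forall_dotProduct_mulVec_nonneg.mpr fun z => ?_
    simpa only [transpose_vecMulVec, mul_vecMulVec, trace_vecMulVec, dotProduct_comm] using
      h _ (posSemidef_vecMulVec_star_self z)

end TraceDuality

section Block

variable {P R n S : Type*}

/-- The `(k, l)` block of a matrix in `M_P(M_n)`; this is `blk` for arbitrary index types and
entries. -/
def block (X : Matrix (P × n) (P × n) S) (k l : P) : Matrix n n S :=
  X.submatrix (Prod.mk k) (Prod.mk l)

theorem trace_mul_transpose_eq_sum_trace_block [NonUnitalNonAssocSemiring S] [Fintype P]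
    [Fintype n] (X Y : Matrix (P × n) (P × n) S) :
    (X * Yᵀ).trace = ∑ k, ∑ l, (block X k l * (block Y k l)ᵀ).trace := by
  simp only [trace, diag_apply, mul_apply, transpose_apply, Fintype.sum_prod_type, block,
    submatrix_apply]
  exact Finset.sum_congr rfl fun k _ => Finset.sum_comm

/-- The blockwise trace pairing `[Tr(X_{k,l} Z_{g,h}ᵀ)]` of two block matrices with blocks of the
same size, as a matrix indexed by pairs of block indices. -/
def tracePairing [NonUnitalNonAssocSemiring S] [Fintype n] (X : Matrix (P × n) (P × n) S)
    (Z : Matrix (R × n) (R × n) S) : Matrix (P × R) (P × R) S :=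
  of fun u v => (block X u.1 v.1 * (block Z u.2 v.2)ᵀ).trace

end Block

section Compress

variable {p q r c : ℕ} (X : Matrix ((Fin p × Fin q) × Fin c) ((Fin p × Fin q) × Fin c) ℂ)

theorem block_compress (α : Matrix (Fin r) (Fin p × Fin q) ℂ) (g h : Fin r) :
    block (compress α X) g h = ∑ k, ∑ l, (α g k * star (α h l)) • block X k l := by
  ext s t
  simp [block, compress, Matrix.sum_apply]

theorem trace_compress_star_mul_transpose (z : (Fin p × Fin q) × Fin r → ℂ)
    (Z : Matrix (Fin r × Fin c) (Fin r × Fin c) ℂ) :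
    (compress (of fun g k => star (z (k, g))) X * Zᵀ).trace =
      star z ⬝ᵥ tracePairing X Z *ᵥ z := by
  calc (compress (of fun g k => star (z (k, g))) X * Zᵀ).trace
      = ∑ g, ∑ h, ∑ k, ∑ l, star (z (k, g)) * (tracePairing X Z (k, g) (l, h) * z (l, h)) := by
        simp only [trace_mul_transpose_eq_sum_trace_block, block_compress, Finset.sum_mul,
          trace_sum, smul_mul, trace_smul, smul_eq_mul, tracePairing, of_apply, star_star,
          mul_assoc, mul_comm (z _)]
    _ = ∑ k, ∑ g, ∑ l, ∑ h, star (z (k, g)) * (tracePairing X Z (k, g) (l, h) * z (l, h)) := by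
        rw [Finset.sum_comm_cycle]
        exact Finset.sum_congr rfl fun k _ => Finset.sum_congr rfl fun g _ => Finset.sum_comm
    _ = star z ⬝ᵥ tracePairing X Z *ᵥ z := by
        simp only [dotProduct, mulVec, Fintype.sum_prod_type, Finset.mul_sum, Pi.star_apply]

theorem forall_posSemidef_compress_iff :
    (∀ α : Matrix (Fin r) (Fin p × Fin q) ℂ, (compress α X).PosSemidef) ↔
      ∀ Z : Matrix (Fin r × Fin c) (Fin r × Fin c) ℂ, Z.PosSemidef →
        (tracePairing X Z).PosSemidef := by
  constructor
  · intro h Z hZ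
    refine posSemidef_iff_forall_dotProduct_mulVec_nonneg.mpr fun z => ?_
    rw [← trace_compress_star_mul_transpose]
    exact posSemidef_iff_forall_trace_mul_transpose_nonneg.mp (h _) Z hZ
  · intro h α
    obtain ⟨z, rfl⟩ : ∃ z : (Fin p × Fin q) × Fin r → ℂ, of (fun g k => star (z (k, g))) = α :=
      ⟨fun u => star (α u.2 u.1), by ext; simp⟩
    refine posSemidef_iff_forall_trace_mul_transpose_nonneg.mpr fun Z hZ => ?_
    rw [trace_compress_star_mul_transpose]
    exact (h Z hZ).dotProduct_mulVec_nonneg z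

end Compress

section Form

variable {ι κ : Type*}

/-- The amplification of a form `T` on a family of matrix algebras `M_{d m}` to block matrices in
`M_{t m}(M_{d m})`, as a matrix indexed by the families of block indices. -/
def formAmpl {d t : ι → ℕ} (T : (∀ m, Mat (d m)) → ℂ)
    (X : ∀ m, Matrix (Fin (t m) × Fin (d m)) (Fin (t m) × Fin (d m)) ℂ) :
    Matrix (∀ m, Fin (t m)) (∀ m, Fin (t m)) ℂ :=
  of fun i j => T fun m => blk (X m) (i m) (j m)

/-- Positivity of a form `T` at the levels `t`: the amplification of `T` sends positive block
matrices to a positive matrix. It treats all labels `m : ι` alike. -/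
def IsFormPos {d : ι → ℕ} (T : (∀ m, Mat (d m)) → ℂ) (t : ι → ℕ) : Prop :=
  ∀ X : ∀ m, Matrix (Fin (t m) × Fin (d m)) (Fin (t m) × Fin (d m)) ℂ,
    (∀ m, (X m).PosSemidef) → (formAmpl T X).PosSemidef

theorem isFormPos_iff_of_forall_comp_eq {d : ι → ℕ} (t : ι → ℕ) (σ : κ ≃ ι)
    {T : (∀ m, Mat (d m)) → ℂ} {S : (∀ m, Mat (d (σ m))) → ℂ}
    (hS : ∀ x, S (fun m => x (σ m)) = T x) :
    IsFormPos T t ↔ IsFormPos S (fun m => t (σ m)) := by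
  refine (σ.piCongrLeft fun m => Matrix (Fin (t m) × Fin (d m)) (Fin (t m) × Fin (d m)) ℂ).symm
    |>.forall_congr fun X => imp_congr σ.forall_congr_right.symm ?_
  have reindex : (formAmpl S fun m => X (σ m)) = (formAmpl T X).submatrix
      (σ.piCongrLeft fun m => Fin (t m)) (σ.piCongrLeft fun m => Fin (t m)) := by
    ext i j
    rw [submatrix_apply, formAmpl, formAmpl, of_apply, of_apply, ← hS]
    simp only [Equiv.piCongrLeft_apply_apply]
  exact reindex ▸ (posSemidef_submatrix_equiv _).symm

end Form

section Trilinear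

/-- A family over the three labels `A`, `B`, `C`, as a nested triple; the nesting is that of the
block indices `((i, k), g)` of `tracePairing (ampl φ x y) z`. -/
def piFinThreeEquiv (F : Fin 3 → Type*) : (∀ m, F m) ≃ (F 0 × F 1) × F 2 where
  toFun f := ((f 0, f 1), f 2)
  invFun u := fun
    | 0 => u.1.1
    | 1 => u.1.2
    | 2 => u.2
  left_inv f := by
    funext m
    fin_cases m <;> rfl
  right_inv _ := rfl

/-- The trilinear form `Tr(φ(x_A, x_B) x_Cᵀ)` of a bilinear map, which determines the map. -/
def traceForm {d : Fin 3 → ℕ} (φ : Mat (d 0) →ₗ[ℂ] Mat (d 1) →ₗ[ℂ] Mat (d 2))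
    (x : ∀ m, Mat (d m)) : ℂ :=
  (φ (x 0) (x 1) * (x 2)ᵀ).trace

theorem isPQRPos_iff_forall_posSemidef_tracePairing {a b c p q r : ℕ}
    (φ : Mat a →ₗ[ℂ] Mat b →ₗ[ℂ] Mat c) :
    IsPQRPos φ p q r ↔
      ∀ x : Matrix (Fin p × Fin a) (Fin p × Fin a) ℂ, x.PosSemidef →
      ∀ y : Matrix (Fin q × Fin b) (Fin q × Fin b) ℂ, y.PosSemidef →
      ∀ z : Matrix (Fin r × Fin c) (Fin r × Fin c) ℂ, z.PosSemidef →
        (tracePairing (ampl φ x y) z).PosSemidef :=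
  forall₄_congr fun x _ y _ => forall_posSemidef_compress_iff (ampl φ x y)

theorem posSemidef_formAmpl_traceForm_iff {d t : Fin 3 → ℕ}
    (φ : Mat (d 0) →ₗ[ℂ] Mat (d 1) →ₗ[ℂ] Mat (d 2))
    (X : ∀ m, Matrix (Fin (t m) × Fin (d m)) (Fin (t m) × Fin (d m)) ℂ) :
    (formAmpl (traceForm φ) X).PosSemidef ↔
      (tracePairing (ampl φ (X 0) (X 1)) (X 2)).PosSemidef := by
  have reindex : formAmpl (traceForm φ) X =
      (tracePairing (ampl φ (X 0) (X 1)) (X 2)).submatrix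
        (piFinThreeEquiv fun m => Fin (t m)) (piFinThreeEquiv fun m => Fin (t m)) := by
    ext i j
    rfl
  rw [reindex, posSemidef_submatrix_equiv]

theorem isPQRPos_iff_isFormPos_traceForm {d : Fin 3 → ℕ} (t : Fin 3 → ℕ)
    (φ : Mat (d 0) →ₗ[ℂ] Mat (d 1) →ₗ[ℂ] Mat (d 2)) :
    IsPQRPos φ (t 0) (t 1) (t 2) ↔ IsFormPos (traceForm φ) t := by
  simp only [isPQRPos_iff_forall_posSemidef_tracePairing, IsFormPos,
    posSemidef_formAmpl_traceForm_iff]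
  constructor
  · intro h X hX
    exact h (X 0) (hX 0) (X 1) (hX 1) (X 2) (hX 2)
  · intro h x hx y hy z hz
    obtain ⟨X, hX⟩ := (piFinThreeEquiv fun m =>
      Matrix (Fin (t m) × Fin (d m)) (Fin (t m) × Fin (d m)) ℂ).surjective ((x, y), z)
    obtain ⟨⟨rfl, rfl⟩, rfl⟩ : (X 0 = x ∧ X 1 = y) ∧ X 2 = z := by
      simpa only [piFinThreeEquiv, Equiv.coe_fn_mk, Prod.mk.injEq] using hX
    exact h X fun
      | 0 => hx
      | 1 => hy
      | 2 => hz

end Trilinear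

/-- Corollary "dual-per": with the three labels encoded by Fin 3, dimensions d : Fin 3 → ℕ
and indices t : Fin 3 → ℕ, if ψ = φ^σ is the bilinear map determined by the trace pairing
identity Tr(φ^σ(x_{σA}, x_{σB}) x_{σC}ᵀ) = Tr(φ(x_A, x_B) x_Cᵀ), then φ is
(t 0, t 1, t 2)-positive iff φ^σ is (t 0, t 1, t 2)^σ-positive. -/
theorem stmt12 (d : Fin 3 → ℕ) (σ : Equiv.Perm (Fin 3)) (t : Fin 3 → ℕ)
    (φ : Mat (d 0) →ₗ[ℂ] Mat (d 1) →ₗ[ℂ] Mat (d 2))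
    (ψ : Mat (d (σ 0)) →ₗ[ℂ] Mat (d (σ 1)) →ₗ[ℂ] Mat (d (σ 2)))
    (hψ : ∀ x : (m : Fin 3) → Mat (d m),
      (ψ (x (σ 0)) (x (σ 1)) * (x (σ 2))ᵀ).trace = (φ (x 0) (x 1) * (x 2)ᵀ).trace) :
    IsPQRPos φ (t 0) (t 1) (t 2) ↔ IsPQRPos ψ (t (σ 0)) (t (σ 1)) (t (σ 2)) := by
  have traceForm_perm (x : ∀ m, Mat (d m)) :
      traceForm (d := fun m => d (σ m)) ψ (fun m => x (σ m)) = traceForm φ x := hψ x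
  rw [isPQRPos_iff_isFormPos_traceForm t φ, isFormPos_iff_of_forall_comp_eq t σ traceForm_perm]
  exact (isPQRPos_iff_isFormPos_traceForm (d := fun m => d (σ m)) (fun m => t (σ m)) ψ).symm
end
end

section
/- Let φ : M_a × M_b → M_c be a ℂ-bilinear map and fix q,r ∈ ℕ. The following are equivalent: (i) φ is (p,q,r)-positive for all p ∈ ℕ; (ii) φ is (p,q,r)-positive for some p ≥ qr; (iii) φ is (qr,q,r)-positive. Moreover, the analogous equivalences hold with the roles of the three indices permuted, i.e., for fixed p,r ∈ ℕ: φ is (p,q,r)-positive for all q iff for some q ≥ pr iff for q = pr. -/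
open Matrix Kronecker ComplexOrder

noncomputable section

/-!
Scalar matrices pass through the amplification of a bilinear map:
`φ(W x W*, U y U*) = (W ⊗ U) φ(x, y) (W ⊗ U)*`. Reshape an `r × pq` matrix `α` as a `qr × p`
matrix `W`; then `α = β (W ⊗ 1)`, where `β` has 0-1 entries. Hence
`α φ(x, y) α* = β φ(W x W*, y) β*`, and the size `p` of the first argument has been traded for `qr`.
A size larger than `qr` is handled by padding `W` with zero rows, and the second argument is treated
symmetrically.
-/

section ScalarConj

variable {k l m n R : Type*} [Fintype k] [Fintype n] [DecidableEq k]

/-- The conjugation `α X α*` of a block matrix `X`, with blocks indexed by `k`, by a scalar matrix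
`α`, which acts on blocks as `α ⊗ 1`. -/
def scalarConj [CommSemiring R] [StarRing R] (α : Matrix m n R) (X : Matrix (n × k) (n × k) R) :
    Matrix (m × k) (m × k) R :=
  (α ⊗ₖ (1 : Matrix k k R)) * X * (α ⊗ₖ (1 : Matrix k k R))ᴴ

theorem scalarConj_apply [CommSemiring R] [StarRing R] (α : Matrix m n R)
    (X : Matrix (n × k) (n × k) R) (u v : m × k) :
    scalarConj α X u v =
      ∑ i, ∑ j, α u.1 i * star (α v.1 j) * X (i, u.2) (j, v.2) := by
  simp only [scalarConj, mul_apply, conjTranspose_apply, kroneckerMap_apply, one_apply,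
    Fintype.sum_prod_type, mul_ite, ite_mul, mul_one, mul_zero, zero_mul, apply_ite star, star_zero,
    Finset.sum_ite_eq, Finset.mem_univ, if_true, Finset.sum_mul]
  rw [Finset.sum_comm]
  exact Finset.sum_congr rfl fun _ _ => Finset.sum_congr rfl fun _ _ => mul_right_comm _ _ _

theorem scalarConj_mul [Fintype m] [CommSemiring R] [StarRing R] (β : Matrix l m R)
    (α : Matrix m n R) (X : Matrix (n × k) (n × k) R) :
    scalarConj (β * α) X = scalarConj β (scalarConj α X) := by
  have h : (β * α) ⊗ₖ (1 : Matrix k k R) =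
      (β ⊗ₖ (1 : Matrix k k R)) * (α ⊗ₖ (1 : Matrix k k R)) := by
    rw [← mul_kronecker_mul, Matrix.one_mul]
  simp only [scalarConj, h, conjTranspose_mul, Matrix.mul_assoc]

theorem posSemidef_scalarConj [Finite m] [CommRing R] [PartialOrder R] [StarRing R]
    (α : Matrix m n R) {X : Matrix (n × k) (n × k) R} (hX : X.PosSemidef) :
    (scalarConj α X).PosSemidef :=
  hX.mul_mul_conjTranspose_same _

end ScalarConj

section Factorization

variable {l m n ι R : Type*} [Fintype l] [Fintype ι] [NonAssocSemiring R]

theorem exists_eq_mul_kronecker_one [Fintype n] [DecidableEq n]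
    (h : Fintype.card n * Fintype.card l ≤ Fintype.card ι) (α : Matrix l (m × n) R) :
    ∃ (β : Matrix l (ι × n) R) (W : Matrix ι m R), α = β * (W ⊗ₖ (1 : Matrix n n R)) := by
  classical
  obtain ⟨e⟩ : Nonempty (n × l ↪ ι) :=
    Function.Embedding.nonempty_of_card_le (by rwa [Fintype.card_prod])
  refine ⟨of fun s tk => if e (tk.2, s) = tk.1 then 1 else 0,
    of (Function.extend e (fun ks i => α ks.2 (i, ks.1)) 0), ?_⟩
  ext s ⟨i, k⟩
  simp [mul_apply, Fintype.sum_prod_type, one_apply, e.injective.extend_apply]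

theorem exists_eq_mul_one_kronecker [Fintype m] [DecidableEq m]
    (h : Fintype.card m * Fintype.card l ≤ Fintype.card ι) (α : Matrix l (m × n) R) :
    ∃ (β : Matrix l (m × ι) R) (U : Matrix ι n R), α = β * ((1 : Matrix m m R) ⊗ₖ U) := by
  obtain ⟨β, U, hα⟩ := exists_eq_mul_kronecker_one h (α.submatrix id Prod.swap)
  refine ⟨β.submatrix id (Equiv.prodComm m ι), U, ?_⟩
  have hswap : (1 : Matrix m m R) ⊗ₖ U =
      (U ⊗ₖ (1 : Matrix m m R)).submatrix (Equiv.prodComm m ι) Prod.swap := by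
    ext
    simp [one_apply]
  rw [hswap, submatrix_mul_equiv, ← hα]
  rfl

end Factorization

section Amplification

variable {a b c p q r P Q : ℕ} (φ : Mat a →ₗ[ℂ] Mat b →ₗ[ℂ] Mat c)

theorem compress_eq_scalarConj (α : Matrix (Fin r) (Fin p × Fin q) ℂ)
    (X : Matrix ((Fin p × Fin q) × Fin c) ((Fin p × Fin q) × Fin c) ℂ) :
    compress α X = scalarConj α X := by
  ext u v
  exact (scalarConj_apply α X u v).symm

theorem blk_scalarConj (W : Matrix (Fin P) (Fin p) ℂ)
    (x : Matrix (Fin p × Fin a) (Fin p × Fin a) ℂ) (i j : Fin P) :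
    blk (scalarConj W x) i j = ∑ i', ∑ j', (W i i' * star (W j j')) • blk x i' j' := by
  ext s t
  simp [blk, scalarConj_apply, Matrix.sum_apply]

theorem ampl_scalarConj (W : Matrix (Fin P) (Fin p) ℂ) (U : Matrix (Fin Q) (Fin q) ℂ)
    (x : Matrix (Fin p × Fin a) (Fin p × Fin a) ℂ) (y : Matrix (Fin q × Fin b) (Fin q × Fin b) ℂ) :
    ampl φ (scalarConj W x) (scalarConj U y) = scalarConj (W ⊗ₖ U) (ampl φ x y) := by
  ext ⟨⟨i, k⟩, s⟩ ⟨⟨j, l⟩, t⟩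
  simp only [ampl, of_apply, blk_scalarConj, scalarConj_apply, map_sum, map_smul,
    LinearMap.sum_apply, LinearMap.smul_apply, Matrix.sum_apply, Matrix.smul_apply, smul_eq_mul,
    Fintype.sum_prod_type, kroneckerMap_apply, star_mul', Finset.mul_sum]
  rw [Finset.sum_comm_cycle]
  refine Finset.sum_congr rfl fun i' _ => Finset.sum_congr rfl fun k' _ => ?_
  rw [Finset.sum_comm]
  refine Finset.sum_congr rfl fun j' _ => Finset.sum_congr rfl fun l' _ => ?_
  ring

variable {φ}

theorem IsPQRPos.of_forall_factorization (h : IsPQRPos φ P Q r)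
    (hfac : ∀ α : Matrix (Fin r) (Fin p × Fin q) ℂ,
      ∃ (β : Matrix (Fin r) (Fin P × Fin Q) ℂ) (W : Matrix (Fin P) (Fin p) ℂ)
        (U : Matrix (Fin Q) (Fin q) ℂ), α = β * (W ⊗ₖ U)) :
    IsPQRPos φ p q r := by
  intro x hx y hy α
  obtain ⟨β, W, U, rfl⟩ := hfac α
  have heq : compress (β * (W ⊗ₖ U)) (ampl φ x y) =
      compress β (ampl φ (scalarConj W x) (scalarConj U y)) := by
    rw [compress_eq_scalarConj, compress_eq_scalarConj, scalarConj_mul, ampl_scalarConj]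
  rw [heq]
  exact h _ (posSemidef_scalarConj W hx) _ (posSemidef_scalarConj U hy) β

theorem IsPQRPos.of_mul_le_left (h : IsPQRPos φ P q r) (hP : q * r ≤ P) : IsPQRPos φ p q r :=
  h.of_forall_factorization fun α =>
    have ⟨β, W, hα⟩ := exists_eq_mul_kronecker_one (ι := Fin P) (by simpa using hP) α
    ⟨β, W, 1, hα⟩

theorem IsPQRPos.of_mul_le_right (h : IsPQRPos φ p Q r) (hQ : p * r ≤ Q) : IsPQRPos φ p q r :=
  h.of_forall_factorization fun α =>
    have ⟨β, U, hα⟩ := exists_eq_mul_one_kronecker (ι := Fin Q) (by simpa using hQ) α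
    ⟨β, 1, U, hα⟩

end Amplification

/-- For fixed q, r: φ is (p,q,r)-positive for all p iff for some p ≥ qr iff for p = qr;
and the analogous equivalences with the roles of the indices permuted (fixed p, r). -/
theorem stmt13 {a b c : ℕ} (φ : Mat a →ₗ[ℂ] Mat b →ₗ[ℂ] Mat c) :
    (∀ q r : ℕ,
      ((∀ p : ℕ, IsPQRPos φ p q r) ↔ (∃ p : ℕ, q * r ≤ p ∧ IsPQRPos φ p q r)) ∧
      ((∀ p : ℕ, IsPQRPos φ p q r) ↔ IsPQRPos φ (q * r) q r)) ∧
    (∀ p r : ℕ,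
      ((∀ q : ℕ, IsPQRPos φ p q r) ↔ (∃ q : ℕ, p * r ≤ q ∧ IsPQRPos φ p q r)) ∧
      ((∀ q : ℕ, IsPQRPos φ p q r) ↔ IsPQRPos φ p (p * r) r)) := by
  refine ⟨fun q r => ⟨⟨fun h => ⟨q * r, le_rfl, h _⟩, ?_⟩, fun h => h _, ?_⟩,
    fun p r => ⟨⟨fun h => ⟨p * r, le_rfl, h _⟩, ?_⟩, fun h => h _, ?_⟩⟩
  · exact fun ⟨_, hP, h⟩ _ => h.of_mul_le_left hP
  · exact fun h _ => h.of_mul_le_left le_rfl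
  · exact fun ⟨_, hQ, h⟩ _ => h.of_mul_le_right hQ
  · exact fun h _ => h.of_mul_le_right le_rfl
end
end

section
/- Let φ : M_a × M_b → M_c be a ℂ-bilinear map and let D_φ : M_{ab} → M_c be its linearization, the linear map determined by D_φ(x ⊗ y) = φ(x,y) under the identification M_a ⊗ M_b ≅ M_{ab}. Then for each r ∈ ℕ, φ is (a,b,r)-positive if and only if D_φ is r-positive. -/
open Matrix Kronecker ComplexOrder

noncomputable section

/-- The s-fold ampliation of a map between matrix spaces, applied to an s×s block
matrix. -/
def linAmpl {m n : Type*} (ψ : Matrix m m ℂ → Matrix n n ℂ) {s : ℕ}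
    (x : Matrix (Fin s × m) (Fin s × m) ℂ) : Matrix (Fin s × n) (Fin s × n) ℂ :=
  Matrix.of fun u v => ψ (Matrix.of fun e f => x (u.1, e) (v.1, f)) u.2 v.2

/-- A map between matrix spaces is s-positive if its s-fold ampliation preserves
positive semidefiniteness. -/
def LinPos {m n : Type*} [Fintype m] [Fintype n] (ψ : Matrix m m ℂ → Matrix n n ℂ)
    (s : ℕ) : Prop :=
  ∀ (x : Matrix (Fin s × m) (Fin s × m) ℂ), x.PosSemidef → (linAmpl ψ x).PosSemidef

/-!
Let `Ω = vec 1 (vec 1)ᴴ` be the unnormalised maximally entangled matrix. Since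
`(α ⊗ 1) vec 1 = vec αᵀ`, every rank-one positive block matrix is a compression
`(α ⊗ 1) Ω (α ⊗ 1)ᴴ`, so by the spectral theorem the `r`-positivity of a linear map only has to be
tested on these matrices. Ampliation commutes with compression, which turns the test into one on
the compressions of the Choi matrix. For `M_a ⊗ M_b` the matrix `Ω` is the product of those of the
two factors, so the Choi matrix of `D_φ` is `φ_{a,b}(Ω_a, Ω_b)`. Conversely, `α φ_{p,q}(x, y) αᴴ` is
the ampliation of `D_φ` at the positive matrix `(α ⊗ 1) (x ⊗ y) (α ⊗ 1)ᴴ`.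
-/

section CommSemiring

variable {R ι κ m n : Type*} [CommSemiring R]

/-- The ampliation `id ⊗ ψ` of a linear map `ψ` between matrix spaces, acting blockwise on block
matrices indexed by an arbitrary type `ι`. The block `(i, j)` of `X` is encoded as
`X.submatrix (Prod.mk i) (Prod.mk j)`. -/
@[simps]
def ampliation (ψ : Matrix m m R →ₗ[R] Matrix n n R) :
    Matrix (ι × m) (ι × m) R →ₗ[R] Matrix (ι × n) (ι × n) R where
  toFun X := Matrix.of fun u v => ψ (X.submatrix (Prod.mk u.1) (Prod.mk v.1)) u.2 v.2
  map_add' X Y := by ext; simp [submatrix_add]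
  map_smul' t X := by ext; simp [submatrix_smul]

/-- The Kronecker product `x ⊗ y` of two block matrices, with the two block indices collected in
the first factor and the two inner indices in the second. -/
def blockKronecker (x : Matrix (ι × m) (ι × m) R) (y : Matrix (κ × n) (κ × n) R) :
    Matrix ((ι × κ) × (m × n)) ((ι × κ) × (m × n)) R :=
  (x ⊗ₖ y).submatrix (Equiv.prodProdProdComm ι κ m n) (Equiv.prodProdProdComm ι κ m n)

/-- The unnormalised maximally entangled matrix `∑ i j, E i j ⊗ E i j`, the block matrix on which
linear maps between matrix spaces are tested. As `vec 1` is real, no conjugation is needed. -/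
def maxEntangled (R m : Type*) [CommSemiring R] [DecidableEq m] : Matrix (m × m) (m × m) R :=
  vecMulVec (vec 1) (vec 1)

/-- The Choi matrix `∑ i j, E i j ⊗ ψ (E i j)` of a linear map between matrix spaces, whose
compressions detect `s`-positivity. -/
def choiMatrix [DecidableEq m] (ψ : Matrix m m R →ₗ[R] Matrix n n R) : Matrix (m × n) (m × n) R :=
  ampliation ψ (maxEntangled R m)

theorem blockKronecker_maxEntangled [DecidableEq m] [DecidableEq n] :
    blockKronecker (maxEntangled R m) (maxEntangled R n) = maxEntangled R (m × n) := by
  ext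
  simp only [blockKronecker, maxEntangled, submatrix_apply, kroneckerMap_apply, vecMulVec_apply,
    Equiv.prodProdProdComm_apply, vec, ← one_kronecker_one (m := m) (n := n)]
  exact mul_mul_mul_comm _ _ _ _

end CommSemiring

section StarRing

variable {R ι κ m n : Type*} [CommSemiring R] [StarRing R] [Fintype κ] [Fintype m] [DecidableEq m]

/-- The compression `α X αᴴ` of a block matrix `X` by a matrix `α` of scalars acting on the block
indices, that is, by `α ⊗ 1`. -/
def blockCompress (α : Matrix ι κ R) (X : Matrix (κ × m) (κ × m) R) :
    Matrix (ι × m) (ι × m) R :=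
  (α ⊗ₖ (1 : Matrix m m R)) * X * (α ⊗ₖ (1 : Matrix m m R))ᴴ

theorem blockCompress_apply (α : Matrix ι κ R) (X : Matrix (κ × m) (κ × m) R) (u v : ι × m) :
    blockCompress α X u v = ∑ k, ∑ l, α u.1 k * star (α v.1 l) * X (k, u.2) (l, v.2) := by
  simp only [blockCompress, mul_apply, conjTranspose_apply, kroneckerMap_apply, one_apply,
    Fintype.sum_prod_type, Finset.sum_mul, mul_ite, ite_mul, mul_one, mul_zero, zero_mul,
    apply_ite star, star_zero, Finset.sum_ite_eq, Finset.mem_univ, if_true]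
  rw [Finset.sum_comm]
  exact Finset.sum_congr rfl fun k _ => Finset.sum_congr rfl fun l _ => mul_right_comm _ _ _

theorem blockCompress_submatrix_mk (α : Matrix ι κ R) (X : Matrix (κ × m) (κ × m) R) (i j : ι) :
    (blockCompress α X).submatrix (Prod.mk i) (Prod.mk j) =
      ∑ k, ∑ l, (α i k * star (α j l)) • X.submatrix (Prod.mk k) (Prod.mk l) := by
  ext e f
  simp [blockCompress_apply, Matrix.sum_apply]

theorem ampliation_blockCompress [Fintype n] [DecidableEq n] (ψ : Matrix m m R →ₗ[R] Matrix n n R)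
    (α : Matrix ι κ R) (X : Matrix (κ × m) (κ × m) R) :
    ampliation ψ (blockCompress α X) = blockCompress α (ampliation ψ X) := by
  ext u v
  simp [blockCompress_apply, blockCompress_submatrix_mk, Matrix.sum_apply]

theorem blockCompress_maxEntangled (α : Matrix ι m R) :
    blockCompress α (maxEntangled R m) = vecMulVec (vec αᵀ) (star (vec αᵀ)) := by
  rw [blockCompress, maxEntangled, mul_vecMulVec, vecMulVec_mul, kronecker_mulVec_vec,
    conjTranspose_kronecker, vec_vecMul_kronecker]
  simp [star_vec, conjTranspose]

end StarRing

section PosSemidef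

variable {𝕜 ι κ m n : Type*} [RCLike 𝕜]

theorem posSemidef_blockKronecker [Finite ι] [Finite κ] [Finite m] [Finite n]
    {x : Matrix (ι × m) (ι × m) 𝕜} {y : Matrix (κ × n) (κ × n) 𝕜}
    (hx : x.PosSemidef) (hy : y.PosSemidef) : (blockKronecker x y).PosSemidef :=
  (hx.kronecker hy).submatrix _

theorem posSemidef_maxEntangled [Finite m] [DecidableEq m] : (maxEntangled 𝕜 m).PosSemidef := by
  simpa [maxEntangled, star_vec] using posSemidef_vecMulVec_self_star (vec (1 : Matrix m m 𝕜))

theorem posSemidef_blockCompress [Finite ι] [Fintype κ] [Fintype m] [DecidableEq m]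
    {X : Matrix (κ × m) (κ × m) 𝕜} (hX : X.PosSemidef) (α : Matrix ι κ 𝕜) :
    (blockCompress α X).PosSemidef :=
  hX.mul_mul_conjTranspose_same _

theorem exists_eq_sum_blockCompress_maxEntangled [Finite ι] [Fintype m] [DecidableEq m]
    {X : Matrix (ι × m) (ι × m) 𝕜} (hX : X.PosSemidef) :
    ∃ (N : ℕ) (α : Fin N → Matrix ι m 𝕜), X = ∑ k, blockCompress (α k) (maxEntangled 𝕜 m) := by
  obtain ⟨N, v, rfl⟩ := posSemidef_iff_eq_sum_vecMulVec.mp hX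
  refine ⟨N, fun k => Matrix.of fun i e => v k (i, e), ?_⟩
  simp only [blockCompress_maxEntangled]
  rfl

end PosSemidef

theorem linAmpl_eq_ampliation {m n : Type*} (ψ : Matrix m m ℂ →ₗ[ℂ] Matrix n n ℂ) {s : ℕ}
    (X : Matrix (Fin s × m) (Fin s × m) ℂ) : linAmpl ψ X = ampliation ψ X :=
  rfl

theorem linPos_iff_posSemidef_blockCompress_choiMatrix {m n : Type*} [Fintype m] [DecidableEq m]
    [Fintype n] [DecidableEq n] (ψ : Matrix m m ℂ →ₗ[ℂ] Matrix n n ℂ) (s : ℕ) :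
    LinPos ψ s ↔ ∀ α : Matrix (Fin s) m ℂ, (blockCompress α (choiMatrix ψ)).PosSemidef := by
  constructor
  · intro hψ α
    rw [choiMatrix, ← ampliation_blockCompress, ← linAmpl_eq_ampliation]
    exact hψ _ (posSemidef_blockCompress posSemidef_maxEntangled α)
  · intro hψ X hX
    obtain ⟨N, α, rfl⟩ := exists_eq_sum_blockCompress_maxEntangled hX
    simp only [linAmpl_eq_ampliation, map_sum, ampliation_blockCompress]
    exact posSemidef_sum _ fun k _ => hψ (α k)

section Linearization

variable {a b c p q r : ℕ} {φ : Mat a →ₗ[ℂ] Mat b →ₗ[ℂ] Mat c}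
  {D : Matrix (Fin a × Fin b) (Fin a × Fin b) ℂ →ₗ[ℂ] Mat c}

theorem compress_eq_blockCompress (α : Matrix (Fin r) (Fin p × Fin q) ℂ)
    (X : Matrix ((Fin p × Fin q) × Fin c) ((Fin p × Fin q) × Fin c) ℂ) :
    compress α X = blockCompress α X := by
  ext u v
  exact (blockCompress_apply α X u v).symm

theorem ampl_eq_ampliation (hD : ∀ (x : Mat a) (y : Mat b), D (x ⊗ₖ y) = φ x y)
    (x : Matrix (Fin p × Fin a) (Fin p × Fin a) ℂ) (y : Matrix (Fin q × Fin b) (Fin q × Fin b) ℂ) :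
    ampl φ x y = ampliation D (blockKronecker x y) := by
  ext u v
  exact congrFun₂ (hD (blk x u.1.1 v.1.1) (blk y u.1.2 v.1.2)).symm u.2 v.2

theorem choiMatrix_eq_ampl (hD : ∀ (x : Mat a) (y : Mat b), D (x ⊗ₖ y) = φ x y) :
    choiMatrix D = ampl φ (maxEntangled ℂ (Fin a)) (maxEntangled ℂ (Fin b)) := by
  rw [ampl_eq_ampliation hD, blockKronecker_maxEntangled, choiMatrix]

theorem LinPos.isPQRPos (hD : ∀ (x : Mat a) (y : Mat b), D (x ⊗ₖ y) = φ x y)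
    (hpos : LinPos D r) (p q : ℕ) : IsPQRPos φ p q r := by
  intro x hx y hy α
  rw [compress_eq_blockCompress, ampl_eq_ampliation hD, ← ampliation_blockCompress,
    ← linAmpl_eq_ampliation]
  exact hpos _ (posSemidef_blockCompress (posSemidef_blockKronecker hx hy) α)

theorem IsPQRPos.linPos (hD : ∀ (x : Mat a) (y : Mat b), D (x ⊗ₖ y) = φ x y)
    (hφ : IsPQRPos φ a b r) : LinPos D r := by
  rw [linPos_iff_posSemidef_blockCompress_choiMatrix]
  intro α
  rw [choiMatrix_eq_ampl hD, ← compress_eq_blockCompress]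
  exact hφ _ posSemidef_maxEntangled _ posSemidef_maxEntangled α

end Linearization

/-- Corollary "special" (i): φ is (a,b,r)-positive iff its linearization
D_φ : M_{ab} → M_c (determined by D(x ⊗ y) = φ(x,y)) is r-positive. -/
theorem stmt15 {a b c : ℕ} (φ : Mat a →ₗ[ℂ] Mat b →ₗ[ℂ] Mat c)
    (D : Matrix (Fin a × Fin b) (Fin a × Fin b) ℂ →ₗ[ℂ] Mat c)
    (hD : ∀ (x : Mat a) (y : Mat b), D (x ⊗ₖ y) = φ x y) (r : ℕ) :
    IsPQRPos φ a b r ↔ LinPos (⇑D) r :=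
  ⟨IsPQRPos.linPos hD, fun hpos => hpos.isPQRPos hD a b⟩
end
end
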